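/- Let k ∈ ℕ, m ∈ ℚ, and let G be a graph with at most countably many ends in which every end is dominated by fewer than k vertices, every vertex has degree > m and every end has relative degree > m. Then for any finite X ⊆ V(G), G has an induced subgraph G' and a collection 𝓕 of pairwise disjoint finite vertex sets such that: (i) X ∪ ⋃𝓕 ⊆ V(G'); (ii) there are disjoint connected subgraphs H_F (F ∈ 𝓕) of G with V(H_F) ∩ V(G') = F; (iii) every vertex of G' of degree ≤ m in G' lies in some F ∈ 𝓕 whose average degree in G' exceeds m − k + 1; and (iv) every ray of G meets V(G') in only finitely many vertices. -/

import Mathlib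

open scoped ENNReal

namespace Paper

variable {V : Type*} {W : Type*}

/-- Reachability in `G` by a walk avoiding the vertex set `S`. -/
def ReachAvoid (G : SimpleGraph V) (S : Set V) (u v : V) : Prop :=
  ∃ p : G.Walk u v, ∀ x ∈ p.support, x ∉ S

/-- A ray (one-way infinite path) in `G`. -/
structure IsRay (G : SimpleGraph V) (f : ℕ → V) : Prop where
  inj : Function.Injective f
  adj : ∀ n, G.Adj (f n) (f (n + 1))

/-- Two rays are equivalent (belong to the same end) if no finite vertex set
separates them: for every finite `S` some vertex of the first ray can be joined
to some vertex of the second by a walk avoiding `S`. -/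
def EquivRay (G : SimpleGraph V) (f g : ℕ → V) : Prop :=
  ∀ S : Set V, S.Finite → ∃ m n, ReachAvoid G S (f m) (g n)

/-- The set of ends of `G`: rays modulo equivalence. -/
def Ends (G : SimpleGraph V) :=
  Quot (fun f g : {f : ℕ → V // IsRay G f} => EquivRay G f.1 g.1)

/-- `v` dominates the ray `f`: there are infinitely many `v`–`V(f)` paths
pairwise disjoint except in `v`. -/
def DominatesRay (G : SimpleGraph V) (v : V) (f : ℕ → V) : Prop :=
  ∃ (g : ℕ → ℕ) (p : ∀ n, G.Walk v (f (g n))),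
    Function.Injective g ∧ (∀ n, (p n).IsPath) ∧
    ∀ m n, m ≠ n → ∀ x ∈ (p m).support, x ∈ (p n).support → x = v

/-- The set of vertices dominating the end of the ray `r`. -/
def Dom (G : SimpleGraph V) (r : ℕ → V) : Set V := {v | DominatesRay G v r}

/-- Vertex-boundary of the vertex set `A`. -/
def vBoundary (G : SimpleGraph V) (A : Set V) : Set V :=
  {x | x ∈ A ∧ ∃ y, y ∉ A ∧ G.Adj x y}

/-- Edge-boundary of the vertex set `A`. -/
def eBoundary (G : SimpleGraph V) (A : Set V) : Set (Sym2 V) :=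
  {e | ∃ x y, x ∈ A ∧ y ∉ A ∧ G.Adj x y ∧ e = s(x, y)}

/-- `S` is a `V'`–`Ω(A)` separator: `V' ⊄ S` and no component of `G - S`
contains both a vertex of `V'` and (the tail of) a ray lying in `A`. -/
def SepVertsEndsIn (G : SimpleGraph V) (V' S A : Set V) : Prop :=
  ¬ V' ⊆ S ∧ ∀ v ∈ V', ∀ f : ℕ → V, IsRay G f → Set.range f ⊆ A →
    ∀ n, (∀ m, n ≤ m → f m ∉ S) → ¬ ReachAvoid G S v (f n)

/-- `S` is an inclusion-minimal `V'`–`Ω(A)` separator. -/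
def MinSepVertsEndsIn (G : SimpleGraph V) (V' S A : Set V) : Prop :=
  SepVertsEndsIn G V' S A ∧ ∀ S' ⊂ S, ¬ SepVertsEndsIn G V' S' A

/-- The graph `G_ω`: `G` minus the dominating vertices of the end of `r`. -/
def Gmin (G : SimpleGraph V) (r : ℕ → V) : SimpleGraph ((Dom G r)ᶜ : Set V) :=
  G.induce ((Dom G r)ᶜ : Set V)

/-- A ray of `G_ω` belonging to (the unique end `ω̂` induced by) the end `ω` of
the ray `r`. -/
def InDeletedEnd (G : SimpleGraph V) (r : ℕ → V)
    (f : ℕ → ((Dom G r)ᶜ : Set V)) : Prop :=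
  IsRay (Gmin G r) f ∧ EquivRay G (fun n => (f n : V)) r

/-- An `ω̂`-region of `G_ω`: induced connected, finite vertex-boundary,
containing a ray of `ω̂`. -/
def IsOmegaRegion (G : SimpleGraph V) (r : ℕ → V)
    (A : Set ((Dom G r)ᶜ : Set V)) : Prop :=
  ((Gmin G r).induce A).Connected ∧ (vBoundary (Gmin G r) A).Finite ∧
    ∃ f, InDeletedEnd G r f ∧ Set.range f ⊆ A

/-- `(Ĥ_i) → ω̂` : a sequence of distinct nested `ω̂`-regions whose
vertex-boundaries are minimal separators. -/
def Converges (G : SimpleGraph V) (r : ℕ → V)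
    (A : ℕ → Set ((Dom G r)ᶜ : Set V)) : Prop :=
  Function.Injective A ∧ (∀ i, IsOmegaRegion G r (A i)) ∧
    (∀ i, A (i + 1) ⊆ A i \ vBoundary (Gmin G r) (A i)) ∧
    (∀ i, MinSepVertsEndsIn (Gmin G r) (vBoundary (Gmin G r) (A i))
      (vBoundary (Gmin G r) (A (i + 1))) (A (i + 1)))

/-- The ratio `|∂_e A| / |∂_v A|`, as an extended nonnegative real. -/
noncomputable def bratio (G : SimpleGraph V) (A : Set V) : ℝ≥0∞ :=
  ((eBoundary G A).encard : ℝ≥0∞) / ((vBoundary G A).encard : ℝ≥0∞)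

open Classical in
/-- The relative degree `d_{e/v}` of the end of the ray `r`. -/
noncomputable def relDegree (G : SimpleGraph V) (r : ℕ → V) : ℝ≥0∞ :=
  if (Dom G r).Infinite ∨ ¬ ∃ f, InDeletedEnd G r f then
    ((Dom G r).encard : ℝ≥0∞)
  else
    ((Dom G r).encard : ℝ≥0∞) +
      ⨅ A : {A : ℕ → Set ((Dom G r)ᶜ : Set V) // Converges G r A},
        Filter.atTop.liminf fun i => bratio (Gmin G r) (A.1 i)

/-- The degree of a vertex, as an extended real. -/
noncomputable def degER (G : SimpleGraph V) (v : V) : EReal :=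
  (((G.neighborSet v).encard : ℝ≥0∞) : EReal)

/-- A subdivision of `K_k` in `G` with branching vertices `b 0, …, b (k-1)`. -/
def HasTKOn (G : SimpleGraph V) {k : ℕ} (b : Fin k ↪ V) : Prop :=
  ∃ p : ∀ i j : Fin k, G.Walk (b i) (b j),
    (∀ i j, i ≠ j → (p i j).IsPath) ∧
    (∀ i j, i ≠ j → ∀ x ∈ (p i j).support, x ∈ Set.range b → x = b i ∨ x = b j) ∧
    (∀ i j i' j', i ≠ j → i' ≠ j' → s(i, j) ≠ s(i', j') →
      ∀ x ∈ (p i j).support, x ∈ (p i' j').support → x ∈ Set.range b)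

/-- `K_k` is a topological minor of `G`. -/
def HasTopK (G : SimpleGraph V) (k : ℕ) : Prop :=
  ∃ b : Fin k ↪ V, HasTKOn G b

/-- A subdivision of `K_{ℵ₀}` in `G` with branching vertices `b 0, b 1, …`. -/
def HasTKInfOn (G : SimpleGraph V) (b : ℕ ↪ V) : Prop :=
  ∃ p : ∀ i j : ℕ, G.Walk (b i) (b j),
    (∀ i j, i ≠ j → (p i j).IsPath) ∧
    (∀ i j, i ≠ j → ∀ x ∈ (p i j).support, x ∈ Set.range b → x = b i ∨ x = b j) ∧
    (∀ i j i' j', i ≠ j → i' ≠ j' → s(i, j) ≠ s(i', j') →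
      ∀ x ∈ (p i j).support, x ∈ (p i' j').support → x ∈ Set.range b)

/-- `K_k` is a minor of `G` (with finite branch sets). -/
def HasKMinor (G : SimpleGraph V) (k : ℕ) : Prop :=
  ∃ B : Fin k → Finset V,
    (∀ i, (B i).Nonempty) ∧ (∀ i j, i ≠ j → Disjoint (B i) (B j)) ∧
    (∀ i, (G.induce (B i : Set V)).Connected) ∧
    (∀ i j, i ≠ j → ∃ x ∈ B i, ∃ y ∈ B j, G.Adj x y)

/-- The average degree of the finite induced subgraph of `G` on `s`. -/
noncomputable def avgDegOn (G : SimpleGraph V) (s : Finset V) : ℝ :=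
  (∑ v ∈ s, ((G.neighborSet v ∩ ↑s).ncard : ℝ)) / s.card

/-- `G` is rayless. -/
def Rayless (G : SimpleGraph V) : Prop := ¬ ∃ f : ℕ → V, IsRay G f

/-- The average degree of the vertex set `F` into `A` in `G`. -/
noncomputable def avgDegIn (G : SimpleGraph V) (A F : Set V) : ℝ :=
  (∑ᶠ v ∈ F, ((G.neighborSet v ∩ A).ncard : ℝ)) / F.ncard


/-! ### Basic facts about `ReachAvoid` -/

theorem ReachAvoid.refl {G : SimpleGraph V} {S : Set V} {u : V} (h : u ∉ S) :
    ReachAvoid G S u u :=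
  ⟨SimpleGraph.Walk.nil, by simpa using h⟩

theorem ReachAvoid.symm {G : SimpleGraph V} {S : Set V} {u v : V} (h : ReachAvoid G S u v) :
    ReachAvoid G S v u := by
  obtain ⟨p, hp⟩ := h
  exact ⟨p.reverse, by simpa using hp⟩

theorem ReachAvoid.trans {G : SimpleGraph V} {S : Set V} {u v w : V} (h : ReachAvoid G S u v)
    (h' : ReachAvoid G S v w) : ReachAvoid G S u w := by
  obtain ⟨p, hp⟩ := h
  obtain ⟨q, hq⟩ := h'
  refine ⟨p.append q, fun x hx => ?_⟩
  rw [SimpleGraph.Walk.mem_support_append_iff] at hx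
  exact hx.elim (hp x) (hq x)

theorem ReachAvoid.mono {G : SimpleGraph V} {S T : Set V} {u v : V} (h : ReachAvoid G S u v)
    (hT : T ⊆ S) : ReachAvoid G T u v := by
  obtain ⟨p, hp⟩ := h
  exact ⟨p, fun x hx hxT => hp x hx (hT hxT)⟩

theorem ReachAvoid.of_adj {G : SimpleGraph V} {S : Set V} {u v : V} (h : G.Adj u v)
    (hu : u ∉ S) (hv : v ∉ S) : ReachAvoid G S u v := by
  refine ⟨h.toWalk, fun x hx => ?_⟩
  simp at hx
  rcases hx with rfl | rfl <;> assumption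

theorem ReachAvoid.left {G : SimpleGraph V} {S : Set V} {u v : V} (h : ReachAvoid G S u v) :
    u ∉ S := by
  obtain ⟨p, hp⟩ := h
  exact hp _ p.start_mem_support

theorem ReachAvoid.right {G : SimpleGraph V} {S : Set V} {u v : V} (h : ReachAvoid G S u v) :
    v ∉ S := h.symm.left

/-- Sets closed under taking neighbours outside `S` are closed under `ReachAvoid`. -/
theorem ReachAvoid.closed {G : SimpleGraph V} {S : Set V} {u v : V} (h : ReachAvoid G S u v)
    (T : Set V) (hu : u ∈ T)
    (hT : ∀ x y, x ∈ T → x ∉ S → G.Adj x y → y ∉ S → y ∈ T) : v ∈ T := by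
  by_contra hv
  obtain ⟨p, hp⟩ := h
  obtain ⟨d, hd, h1, h2⟩ := p.exists_boundary_dart T hu hv
  exact h2 (hT _ _ h1 (hp _ (p.dart_fst_mem_support_of_mem_darts hd)) d.adj
    (hp _ (p.dart_snd_mem_support_of_mem_darts hd)))

/-- Every vertex along can be reached. -/
theorem ReachAvoid.of_closed {G : SimpleGraph V} {S : Set V} {u v : V} (h : ReachAvoid G S u v)
    (T : Set V) (hT : ∀ x, ReachAvoid G S u x → x ∈ T) : ReachAvoid G Tᶜ u v := by
  classical
  obtain ⟨p, hp⟩ := h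
  refine ⟨p, fun x hx hxT => hxT (hT x ⟨p.takeUntil x hx, fun y hy => hp y ?_⟩)⟩
  exact p.support_takeUntil_subset_support hx hy

theorem connected_iff_reach {G : SimpleGraph V} {B : Set V} :
    (G.induce B).Connected ↔ B.Nonempty ∧ ∀ x ∈ B, ∀ y ∈ B, ReachAvoid G Bᶜ x y := by
  constructor
  · intro h
    refine ⟨Set.nonempty_coe_sort.1 h.nonempty, fun x hx y hy => ?_⟩
    obtain ⟨p⟩ := h.preconnected ⟨x, hx⟩ ⟨y, hy⟩
    refine ⟨p.map (SimpleGraph.Embedding.induce B).toHom, fun z hz => ?_⟩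
    have e := SimpleGraph.Walk.support_map (SimpleGraph.Embedding.induce B).toHom p
    have hz2 := (congrArg (fun l => z ∈ l) e).mp hz
    obtain ⟨w, -, rfl⟩ := List.mem_map.1 hz2
    simp
  · rintro ⟨⟨u, hu⟩, h⟩
    have : Nonempty B := ⟨⟨u, hu⟩⟩
    refine ⟨fun x y => ?_⟩
    obtain ⟨p, hp⟩ := h x x.2 y y.2
    exact ⟨p.induce B (fun z hz => by simpa using hp z hz)⟩

theorem IsRay.tail {G : SimpleGraph V} {f : ℕ → V} (h : IsRay G f) (N : ℕ) :
    IsRay G (fun n => f (N + n)) :=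
  ⟨fun a b hab => by simpa using h.inj hab, fun n => h.adj (N + n)⟩

theorem IsRay.eventually_notMem {G : SimpleGraph V} {f : ℕ → V} (h : IsRay G f) {S : Set V}
    (hS : S.Finite) : ∀ᶠ n in Filter.atTop, f n ∉ S := by
  have := (h.inj.tendsto_cofinite).eventually hS.compl_mem_cofinite
  rwa [Nat.cofinite_eq_atTop] at this

theorem IsRay.reach {G : SimpleGraph V} {f : ℕ → V} (h : IsRay G f) {S : Set V} {N : ℕ}
    (hS : ∀ n ≥ N, f n ∉ S) {a b : ℕ} (ha : N ≤ a) (hb : N ≤ b) :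
    ReachAvoid G S (f a) (f b) := by
  have key : ∀ n, N ≤ n → ReachAvoid G S (f N) (f n) := by
    intro n hn
    induction n, hn using Nat.le_induction with
    | base => exact ReachAvoid.refl (hS _ le_rfl)
    | succ n hn ih => exact ih.trans (ReachAvoid.of_adj (h.adj n) (hS _ hn) (hS _ (by omega)))
  exact (key a ha).symm.trans (key b hb)

/-- If a set has only finitely many outer neighbours, a ray is eventually inside or outside. -/
theorem IsRay.eventually_in_or_out {G : SimpleGraph V} {f : ℕ → V} (h : IsRay G f) {U P : Set V}
    (hP : P.Finite) (hU : ∀ x ∈ U, ∀ y, G.Adj x y → y ∉ U → y ∈ P) :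
    (∀ᶠ n in Filter.atTop, f n ∈ U) ∨ (∀ᶠ n in Filter.atTop, f n ∉ U) := by
  by_cases hc : ∀ᶠ n in Filter.atTop, f n ∉ U
  · exact Or.inr hc
  left
  obtain ⟨N, hN⟩ := Filter.eventually_atTop.1 (h.eventually_notMem hP)
  rw [Filter.eventually_atTop] at hc
  push Not at hc
  obtain ⟨a, ha, haU⟩ := hc N
  refine Filter.eventually_atTop.2 ⟨a, fun n hn => ?_⟩
  exact (h.reach hN ha (ha.trans hn)).closed U haU
    (fun x y hx _ hxy hy => by_contra fun hyU => hy (hU x hx y hxy hyU))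

theorem EquivRay.refl {G : SimpleGraph V} {f : ℕ → V} (hf : IsRay G f) : EquivRay G f f := by
  intro S hS
  obtain ⟨N, hN⟩ := Filter.eventually_atTop.1 (hf.eventually_notMem hS)
  exact ⟨N, N, ReachAvoid.refl (hN _ le_rfl)⟩

theorem EquivRay.symm {G : SimpleGraph V} {f g : ℕ → V} (h : EquivRay G f g) :
    EquivRay G g f := by
  intro S hS
  obtain ⟨m, n, h⟩ := h S hS
  exact ⟨n, m, h.symm⟩

/-- Equivalent rays can be joined between arbitrarily late vertices. -/
theorem EquivRay.late {G : SimpleGraph V} {f g : ℕ → V} (h : EquivRay G f g)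
    {S : Set V} (hS : S.Finite) (N : ℕ) :
    ∃ m ≥ N, ∃ n ≥ N, ReachAvoid G S (f m) (g n) := by
  have hfin : (S ∪ f '' Set.Iio N ∪ g '' Set.Iio N).Finite :=
    (hS.union ((Set.finite_Iio N).image _)).union ((Set.finite_Iio N).image _)
  obtain ⟨m, n, hmn⟩ := h _ hfin
  refine ⟨m, ?_, n, ?_, hmn.mono (fun x hx => Or.inl (Or.inl hx))⟩
  · by_contra hc
    exact hmn.left (Or.inl (Or.inr ⟨m, by simpa using hc, rfl⟩))
  · by_contra hc
    exact hmn.right (Or.inr ⟨n, by simpa using hc, rfl⟩)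

theorem EquivRay.trans {G : SimpleGraph V} {f g h : ℕ → V} (hg : IsRay G g)
    (h1 : EquivRay G f g) (h2 : EquivRay G g h) : EquivRay G f h := by
  intro S hS
  obtain ⟨N, hN⟩ := Filter.eventually_atTop.1 (hg.eventually_notMem hS)
  obtain ⟨a, _, b, hb, hab⟩ := h1.late hS N
  obtain ⟨c, hc, d, _, hcd⟩ := h2.late hS N
  exact ⟨a, d, hab.trans ((hg.reach hN hb hc).trans hcd)⟩

theorem EquivRay.of_mk_eq {G : SimpleGraph V} (f g : {f : ℕ → V // IsRay G f})
    (h : (Quot.mk _ f : Ends G) = Quot.mk _ g) : EquivRay G f.1 g.1 := by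
  have h' := Quot.eqvGen_exact h
  induction h' with
  | rel x y h1 => exact h1
  | refl x => exact EquivRay.refl x.2
  | symm x y _ ih => exact (ih (Quot.eqvGen_sound ‹_›)).symm
  | trans x y z _ _ ih1 ih2 =>
    exact EquivRay.trans y.2 (ih1 (Quot.eqvGen_sound ‹_›)) (ih2 (Quot.eqvGen_sound ‹_›))

/-- Eventual containment in a set with finite outer boundary passes to equivalent rays. -/
theorem EquivRay.eventually_in {G : SimpleGraph V} {f g : ℕ → V} (hg : IsRay G g)
    (h : EquivRay G f g) {U P : Set V} (hP : P.Finite)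
    (hU : ∀ x ∈ U, ∀ y, G.Adj x y → y ∉ U → y ∈ P)
    (hf : ∀ᶠ n in Filter.atTop, f n ∈ U) : ∀ᶠ n in Filter.atTop, g n ∈ U := by
  rcases hg.eventually_in_or_out hP hU with h1 | h1
  · exact h1
  exfalso
  obtain ⟨N, hN⟩ := Filter.eventually_atTop.1 (hf.and h1)
  obtain ⟨a, ha, b, hb, hab⟩ := h.late hP N
  exact (hN b hb).2 (hab.closed U (hN a ha).1
    (fun x y hx _ hxy hy => by_contra fun hyU => hy (hU x hx y hxy hyU)))

/-! ### The part of `G - S` in which a ray finally lies -/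

/-- Vertices joined to all late vertices of `f` outside `S`. -/
def Cof (G : SimpleGraph V) (f : ℕ → V) (S : Set V) : Set V :=
  {w | ∀ᶠ n in Filter.atTop, ReachAvoid G S w (f n)}

theorem mem_Cof_of_frequently {G : SimpleGraph V} {f : ℕ → V} (hf : IsRay G f) {S : Set V}
    (hS : S.Finite) {w : V} (h : ∀ N, ∃ n ≥ N, ReachAvoid G S w (f n)) : w ∈ Cof G f S := by
  obtain ⟨N, hN⟩ := Filter.eventually_atTop.1 (hf.eventually_notMem hS)
  obtain ⟨a, ha, h⟩ := h N
  exact Filter.eventually_atTop.2 ⟨N, fun n hn => h.trans (hf.reach hN ha hn)⟩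

theorem Cof_notMem {G : SimpleGraph V} {f : ℕ → V} {S : Set V} {w : V} (h : w ∈ Cof G f S) :
    w ∉ S := by
  obtain ⟨n, hn⟩ := h.exists
  exact hn.left

theorem Cof_adj {G : SimpleGraph V} {f : ℕ → V} {S : Set V} {x y : V} (h : x ∈ Cof G f S)
    (hxy : G.Adj x y) (hy : y ∉ S) : y ∈ Cof G f S := by
  have hx := Cof_notMem h
  exact h.mono fun n hn => (ReachAvoid.of_adj hxy.symm hy hx).trans hn

theorem Cof_reach {G : SimpleGraph V} {f : ℕ → V} {S : Set V} {x y : V} (h : x ∈ Cof G f S)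
    (hxy : ReachAvoid G S x y) : y ∈ Cof G f S :=
  h.mono fun _ hn => hxy.symm.trans hn

theorem Cof_ray {G : SimpleGraph V} {f : ℕ → V} (hf : IsRay G f) {S : Set V}
    (hS : S.Finite) : ∀ᶠ n in Filter.atTop, f n ∈ Cof G f S := by
  obtain ⟨N, hN⟩ := Filter.eventually_atTop.1 (hf.eventually_notMem hS)
  exact Filter.eventually_atTop.2 ⟨N, fun n hn =>
    Filter.eventually_atTop.2 ⟨N, fun k hk => hf.reach hN hn hk⟩⟩

/-- A vertex that cannot be finitely separated from a ray dominates it. -/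
theorem exists_sep_of_not_dom {G : SimpleGraph V} {f : ℕ → V} (hf : IsRay G f) {v : V}
    (hv : v ∉ Dom G f) : ∃ S : Set V, S.Finite ∧ v ∉ S ∧ v ∉ Cof G f S := by
  classical
  by_contra hcon
  push Not at hcon
  apply hv
  obtain ⟨q, hq1, hq2⟩ := exists_seq_of_forall_finset_exists
    (α := Σ n, G.Walk v (f n)) (fun x => x.2.IsPath ∧ f x.1 ≠ v)
    (fun x y => ∀ z ∈ x.2.support, z ∈ y.2.support → z = v) (by
      intro s _
      set S : Set V := (⋃ x ∈ s, {z | z ∈ x.2.support}) \ {v} with hSdef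
      have hSfin : S.Finite := by
        refine Set.Finite.subset (s.finite_toSet.biUnion (t := fun x => {z | z ∈ x.2.support})
          (fun x _ => List.finite_toSet _)) Set.sdiff_subset
      have hvS : v ∉ S := by simp [hSdef]
      have h1 := hcon S hSfin hvS
      have h2 := hf.eventually_notMem (Set.finite_singleton v)
      obtain ⟨n, ⟨p, hp⟩, hn⟩ := (Filter.Eventually.and h1 h2).exists
      refine ⟨⟨n, p.bypass⟩, ⟨p.bypass_isPath, by simpa using hn⟩, ?_⟩
      intro x hx z hz hz'
      by_contra hzv
      refine hp z (p.support_bypass_subset_support hz') ⟨?_, hzv⟩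
      exact Set.mem_iUnion₂.2 ⟨x, hx, hz⟩)
  refine ⟨fun n => (q n).1, fun n => (q n).2, ?_, fun n => (hq1 n).1, ?_⟩
  · have hlt : ∀ a b, a < b → (q a).1 ≠ (q b).1 := by
      intro a b hab he
      have := hq2 a b hab (f (q a).1) (SimpleGraph.Walk.end_mem_support _)
        (by rw [he]; exact SimpleGraph.Walk.end_mem_support _)
      exact (hq1 a).2 this
    intro a b hab
    rcases lt_trichotomy a b with h | h | h
    · exact absurd hab (hlt a b h)
    · exact h
    · exact absurd hab.symm (hlt b a h)
  · intro a b hab x hx hx'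
    rcases lt_or_gt_of_ne hab with h | h
    · exact hq2 a b h x hx hx'
    · exact hq2 b a h x hx' hx

/-! ### Regions -/

/-- A connected set with finite nonempty vertex boundary that finally contains `f`. -/
structure Reg (G : SimpleGraph V) (f : ℕ → V) (B : Set V) : Prop where
  conn : (G.induce B).Connected
  fin : (vBoundary G B).Finite
  ne : (vBoundary G B).Nonempty
  ev : ∀ᶠ n in Filter.atTop, f n ∈ B \ vBoundary G B

theorem exists_region {G : SimpleGraph V} {f : ℕ → V} (hf : IsRay G f)
    (hund : ∀ v, ∃ S : Set V, S.Finite ∧ v ∉ S ∧ v ∉ Cof G f S)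
    {P : Set V} (hP : P.Finite) (hne : ∃ p ∈ P, p ∈ Cof G f ∅) :
    ∃ B, Disjoint P B ∧ Reg G f B ∧
      ∀ s ∈ vBoundary G B, ∃ p ∈ P, p ∈ Cof G f (vBoundary G B \ {s}) := by
  classical
  -- a finite separator disjoint from `P`
  obtain ⟨S0, hS0⟩ : ∃ S : Finset V, Disjoint P (S : Set V) ∧ ∀ p ∈ P, p ∉ Cof G f (S : Set V) := by
    choose Sf hSfin hSv hSC using hund
    have hfin : ((⋃ p ∈ P, Sf p) \ P).Finite := (hP.biUnion fun p _ => hSfin p).sdiff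
    refine ⟨hfin.toFinset, ?_, ?_⟩
    · rw [hfin.coe_toFinset]
      exact Set.disjoint_sdiff_right
    · rw [hfin.coe_toFinset]
      intro p hp hpC
      -- late vertices are not in any `Cof`-complement; walk backwards
      have hlate : ∀ᶠ n in Filter.atTop, ∀ q ∈ P, f n ∈ Cof G f (Sf q) ∧ f n ∉ P := by
        rw [hP.eventually_all]
        intro q _
        exact (Cof_ray hf (hSfin q)).and (hf.eventually_notMem hP)
      obtain ⟨n, hn, hn'⟩ := (Filter.Eventually.and hpC hlate).exists
      -- the set of vertices from which one reaches `f n` avoiding all separators and `P`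
      have hP' : f n ∉ P := (hn' p hp).2
      -- every vertex on the way lies in all the `Cof`s
      have := hn.symm.closed (⋂ q ∈ P, Cof G f (Sf q) \ P) (by
          simp only [Set.mem_iInter]
          exact fun q hq => ⟨(hn' q hq).1, hP'⟩) (by
          intro x y hx _ hxy hy
          simp only [Set.mem_iInter] at hx ⊢
          have hyP : y ∉ P := by
            intro hyP
            exact hSC y (Cof_adj (hx y hyP).1 hxy (hSv y))
          intro q hq
          refine ⟨Cof_adj (hx q hq).1 hxy ?_, hyP⟩
          intro hyS
          exact hy ⟨Set.mem_iUnion₂.2 ⟨q, hq, hyS⟩, hyP⟩)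
      simp only [Set.mem_iInter] at this
      exact (this p hp).2 hp
  obtain ⟨S, -, ⟨hSP, hSC⟩, hmin⟩ := exists_minimal_le_of_wellFoundedLT
    (fun S : Finset V => Disjoint P (S : Set V) ∧ ∀ p ∈ P, p ∉ Cof G f (S : Set V)) S0 hS0
  have hSfin : (S : Set V).Finite := S.finite_toSet
  set C := Cof G f (S : Set V) with hC
  have hdisj : ∀ s ∈ S, ∃ p ∈ P, p ∈ Cof G f ((S : Set V) \ {s}) := by
    intro s hs
    by_contra hcon
    push Not at hcon
    have := @hmin (S.erase s) ⟨hSP.mono_right (by simp), by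
      intro p hp; rw [Finset.coe_erase]; exact hcon p hp⟩ (Finset.erase_subset _ _)
    exact Finset.notMem_erase s S (this hs)
  have hadjC : ∀ s ∈ S, (∃ y ∈ C, G.Adj s y) ∧ ∃ x, x ∉ C ∪ S ∧ G.Adj s x := by
    intro s hs
    obtain ⟨p, hp, hpC⟩ := hdisj s hs
    obtain ⟨n, hn, hnC⟩ := (Filter.Eventually.and hpC (Cof_ray hf hSfin)).exists
    have hpS : p ∉ S := fun h => Set.disjoint_left.1 hSP hp h
    constructor
    · by_contra hcon
      push Not at hcon
      have := hn.closed Cᶜ (hSC p hp) (by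
        intro x y hx hxS hxy hyS hyC
        by_cases hxs : x = s
        · subst hxs
          exact hcon y hyC hxy
        · exact hx (Cof_adj hyC hxy.symm (fun h => hxS ⟨h, hxs⟩)))
      exact this hnC
    · by_contra hcon
      have hcon' : ∀ x, G.Adj s x → x ∈ C ∪ S := by
        intro x hx
        by_contra h
        exact hcon ⟨x, h, hx⟩
      have := hn.closed (C ∪ S)ᶜ (fun h => h.elim (hSC p hp) hpS) (by
        intro x y hx hxS hxy hyS hyC
        rcases hyC with hyC | hyC
        · exact hx (or_iff_not_imp_right.2 fun h => Cof_adj hyC hxy.symm h)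
        · by_cases hys : y = s
          · subst hys
            exact hx (hcon' x hxy.symm)
          · exact hyS ⟨hyC, hys⟩)
      exact this (Or.inl hnC)
  have hbd : vBoundary G (C ∪ S) = S := by
    ext x
    constructor
    · rintro ⟨hx | hx, y, hy, hxy⟩
      · exact absurd (or_iff_not_imp_right.2 fun h => Cof_adj hx hxy h) hy
      · exact hx
    · intro hx
      obtain ⟨y, hy, hxy⟩ := (hadjC x hx).2
      exact ⟨Or.inr hx, y, hy, hxy⟩
  refine ⟨C ∪ S, ?_, ⟨?_, ?_, ?_, ?_⟩, ?_⟩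
  · rw [Set.disjoint_left]
    exact fun p hp h => h.elim (hSC p hp) (fun h => Set.disjoint_left.1 hSP hp h)
  · -- connected
    rw [connected_iff_reach]
    obtain ⟨n0, hn0⟩ := (Cof_ray hf hSfin).exists
    refine ⟨⟨f n0, Or.inl hn0⟩, ?_⟩
    have hCreach : ∀ x ∈ C, ∀ y ∈ C, ReachAvoid G (C ∪ S)ᶜ x y := by
      intro x hx y hy
      obtain ⟨n, hn, hn'⟩ := (Filter.Eventually.and hx hy).exists
      exact ((hn.trans hn'.symm).of_closed C (fun z hz => Cof_reach hx hz)).mono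
        (Set.compl_subset_compl.2 Set.subset_union_left)
    have hS' : ∀ x ∈ C ∪ S, ∃ y ∈ C, ReachAvoid G (C ∪ S)ᶜ x y := by
      rintro x (hx | hx)
      · exact ⟨x, hx, hCreach x hx x hx⟩
      · obtain ⟨y, hy, hxy⟩ := (hadjC x hx).1
        exact ⟨y, hy, ReachAvoid.of_adj hxy (fun h => h (Or.inr hx)) (fun h => h (Or.inl hy))⟩
    intro x hx y hy
    obtain ⟨x', hx', h1⟩ := hS' x hx
    obtain ⟨y', hy', h2⟩ := hS' y hy
    exact h1.trans ((hCreach x' hx' y' hy').trans h2.symm)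
  · rw [hbd]; exact hSfin
  · rw [hbd]
    by_contra h
    rw [Set.not_nonempty_iff_eq_empty] at h
    obtain ⟨p, hp, hpC⟩ := hne
    apply hSC p hp
    rw [hC, h]
    exact hpC
  · rw [hbd]
    exact (Cof_ray hf hSfin).mono fun n hn => ⟨Or.inl hn, Cof_notMem hn⟩
  · rw [hbd]
    exact hdisj

theorem Reg.next {G : SimpleGraph V} {f : ℕ → V} (hf : IsRay G f)
    (hund : ∀ v, ∃ S : Set V, S.Finite ∧ v ∉ S ∧ v ∉ Cof G f S) {A : Set V} (hA : Reg G f A) :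
    ∃ B, Reg G f B ∧ B ⊆ A \ vBoundary G A ∧
      MinSepVertsEndsIn G (vBoundary G A) (vBoundary G B) B := by
  obtain ⟨a, ha⟩ := hA.ne
  have hconn := (connected_iff_reach.1 hA.conn).2
  obtain ⟨B, hdis, hB, hmin⟩ := exists_region hf hund hA.fin
    ⟨a, ha, hA.ev.mono fun n hn => (hconn a ha.1 _ hn.1).mono (Set.empty_subset _)⟩
  have hBsub : vBoundary G B ⊆ B := fun x hx => hx.1
  refine ⟨B, hB, ?_, ⟨?_, ?_⟩, ?_⟩
  · intro x hx
    have hxA : x ∉ vBoundary G A := fun h => Set.disjoint_left.1 hdis h hx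
    refine ⟨?_, hxA⟩
    obtain ⟨n, hn, hn'⟩ := (hA.ev.and hB.ev).exists
    refine ((connected_iff_reach.1 hB.conn).2 _ hn'.1 x hx).closed A hn.1 ?_
    intro u v hu huB huv hv
    by_contra hvA
    exact Set.disjoint_left.1 hdis ⟨hu, v, hvA, huv⟩ (by simpa using huB)
  · intro h
    exact Set.disjoint_left.1 hdis ha (hBsub (h ha))
  · intro v hv g hg hgB n hn hr
    have := hr.closed Bᶜ (fun h => Set.disjoint_left.1 hdis hv h) (by
      intro x y hx _ hxy hy hyB
      exact hy ⟨hyB, x, hx, hxy.symm⟩)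
    exact this (hgB ⟨n, rfl⟩)
  · intro S' hS' hsep
    obtain ⟨hsub, hnot⟩ := hS'
    obtain ⟨s, hs, hsS⟩ := Set.not_subset.1 hnot
    obtain ⟨p, hp, hpC⟩ := hmin s hs
    have hS'' : S' ⊆ vBoundary G B \ {s} := fun x hx => ⟨hsub hx, fun h => hsS (h ▸ hx)⟩
    obtain ⟨N, hN⟩ := Filter.eventually_atTop.1 (Filter.Eventually.and hB.ev hpC)
    refine hsep.2 p hp (fun n => f (N + n)) (hf.tail N) ?_ 0 ?_ ?_
    · rintro _ ⟨n, rfl⟩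
      exact (hN _ (by omega)).1.1
    · intro n _ h
      exact (hN (N + n) (by omega)).1.2 (hsub h)
    · exact (hN (N + 0) (by omega)).2.mono hS''

/-- A whole convergent sequence of regions starting with a given region. -/
theorem Reg.seq {G : SimpleGraph V} {f : ℕ → V} (hf : IsRay G f)
    (hund : ∀ v, ∃ S : Set V, S.Finite ∧ v ∉ S ∧ v ∉ Cof G f S) {A0 : Set V} (hA : Reg G f A0) :
    ∃ A : ℕ → Set V, A 0 = A0 ∧ Function.Injective A ∧ (∀ i, Reg G f (A i)) ∧ (∀ i, A i ⊆ A0) ∧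
      (∀ i, A (i + 1) ⊆ A i \ vBoundary G (A i)) ∧
      ∀ i, MinSepVertsEndsIn G (vBoundary G (A i)) (vBoundary G (A (i + 1))) (A (i + 1)) := by
  choose! nx h1 h2 h3 using fun (A : Set V) (hA : Reg G f A) => hA.next hf hund
  let A : ℕ → Set V := fun n => nx^[n] A0
  have hsucc : ∀ n, A (n + 1) = nx (A n) := fun n => Function.iterate_succ_apply' nx n A0
  have hreg : ∀ n, Reg G f (A n) := by
    intro n
    induction n with
    | zero => exact hA
    | succ n ih => rw [hsucc]; exact h1 _ ih
  have hsub : ∀ i, A (i + 1) ⊆ A i \ vBoundary G (A i) := fun i => by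
    rw [hsucc]; exact h2 _ (hreg i)
  have hanti : StrictAnti A := by
    refine strictAnti_nat_of_succ_lt fun n => ?_
    obtain ⟨a, ha⟩ := (hreg n).ne
    exact ⟨fun x hx => (hsub n hx).1, fun h => (hsub n (h ha.1)).2 ha⟩
  exact ⟨A, rfl, hanti.injective, hreg, fun i => hanti.antitone (Nat.zero_le i), hsub,
    fun i => by rw [hsucc]; exact h3 _ (hreg i)⟩

/-! ### Extracting the degree condition -/

theorem coe_le_iff {x : ℝ≥0∞} {c : ℝ} : (x : EReal) ≤ (c : EReal) ↔ x ≠ ⊤ ∧ x.toReal ≤ c := by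
  induction x with
  | top => simp
  | coe x =>
    have : ((x : ℝ≥0∞) : EReal) = ((x : ℝ) : EReal) := rfl
    simp [this]

theorem coe_add_ofReal {x : ℝ≥0∞} {c : ℝ} : (x : EReal) ≤ (c : EReal) → x ≤ ENNReal.ofReal c := by
  intro h
  rw [coe_le_iff] at h
  rw [← ENNReal.ofReal_toReal h.1]
  exact ENNReal.ofReal_le_ofReal h.2

theorem ratio_witness {G : SimpleGraph V} {A : Set V} (hfin : (vBoundary G A).Finite)
    (hne : (vBoundary G A).Nonempty) {d : ℕ} {m : ℝ}
    (h : (m : EReal) < (((d : ℝ≥0∞) + bratio G A : ℝ≥0∞) : EReal)) :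
    ∃ T : Set V, T.Finite ∧ Disjoint T A ∧ (∀ t ∈ T, ∃ x ∈ vBoundary G A, G.Adj x t) ∧
      (m - d) * (vBoundary G A).ncard <
        ∑ x ∈ hfin.toFinset, ((G.neighborSet x ∩ T).ncard : ℝ) := by
  classical
  set t := hfin.toFinset with ht
  have htpos : 0 < t.card := by
    rw [Finset.card_pos]
    simpa [ht] using hne
  have hcard : (vBoundary G A).ncard = t.card := Set.ncard_eq_toFinset_card _ hfin
  by_cases hall : ∀ x ∈ vBoundary G A, (G.neighborSet x \ A).Finite
  · refine ⟨⋃ x ∈ vBoundary G A, (G.neighborSet x \ A), hfin.biUnion hall, ?_, ?_, ?_⟩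
    · rw [Set.disjoint_left]
      intro y hy hyA
      obtain ⟨x, hx, hxy⟩ := Set.mem_iUnion₂.1 hy
      exact hxy.2 hyA
    · intro y hy
      obtain ⟨x, hx, hxy⟩ := Set.mem_iUnion₂.1 hy
      exact ⟨x, hx, hxy.1⟩
    · by_contra hcon
      push Not at hcon
      apply not_le.2 h
      set E : ℕ := ∑ x ∈ t, (G.neighborSet x \ A).ncard with hE
      have hE1 : (E : ℝ) ≤ (m - d) * (vBoundary G A).ncard := by
        refine le_trans ?_ hcon
        rw [hE]
        push_cast
        refine Finset.sum_le_sum fun x hx => ?_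
        have hx' : x ∈ vBoundary G A := by simpa [ht] using hx
        norm_cast
        refine Set.ncard_le_ncard (fun y hy => ⟨hy.1, Set.mem_iUnion₂.2 ⟨x, hx', hy⟩⟩)
          ((hfin.biUnion hall).inter_of_right _)
      have hsub : eBoundary G A ⊆ ⋃ x ∈ t, (fun y => s(x, y)) '' (G.neighborSet x \ A) := by
        rintro e ⟨x, y, hx, hy, hxy, rfl⟩
        refine Set.mem_iUnion₂.2 ⟨x, ?_, y, ⟨hxy, hy⟩, rfl⟩
        simp only [ht, Set.Finite.mem_toFinset]
        exact ⟨hx, y, hy, hxy⟩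
      have hfinI : ∀ x ∈ t, ((fun y => s(x, y)) '' (G.neighborSet x \ A)).Finite := by
        intro x hx
        exact (hall x (by simpa [ht] using hx)).image _
      have hE2 : (eBoundary G A).encard ≤ (E : ℕ∞) := by
        refine (Set.encard_le_encard hsub).trans ?_
        have hf2 : (⋃ x ∈ t, (fun y => s(x, y)) '' (G.neighborSet x \ A)).Finite :=
          t.finite_toSet.biUnion hfinI
        rw [← hf2.cast_ncard_eq]
        norm_cast
        refine (Finset.set_ncard_biUnion_le t _).trans ?_
        refine Finset.sum_le_sum fun x hx => ?_
        exact Set.ncard_image_le (hall x (by simpa [ht] using hx))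
      have hb : bratio G A ≤ ENNReal.ofReal ((E : ℝ) / t.card) := by
        rw [ENNReal.ofReal_div_of_pos (by exact_mod_cast htpos)]
        unfold bratio
        rw [← hfin.cast_ncard_eq, hcard]
        simp only [ENNReal.ofReal_natCast, ENat.toENNReal_coe]
        gcongr
        have := ENat.toENNReal_le.2 hE2
        simpa using this
      have hle : (d : ℝ≥0∞) + bratio G A ≤ ENNReal.ofReal (d + (E : ℝ) / t.card) := by
        rw [ENNReal.ofReal_add (by positivity) (by positivity), ENNReal.ofReal_natCast]
        gcongr
      rw [coe_le_iff]
      refine ⟨ne_top_of_le_ne_top ENNReal.ofReal_ne_top hle, ?_⟩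
      refine (ENNReal.toReal_mono ENNReal.ofReal_ne_top hle).trans ?_
      rw [ENNReal.toReal_ofReal (by positivity)]
      rw [hcard] at hE1
      have : (E : ℝ) / t.card ≤ m - d := by
        rw [div_le_iff₀ (by exact_mod_cast htpos)]
        exact hE1
      linarith
  · push Not at hall
    obtain ⟨x, hx, hinf⟩ := hall
    obtain ⟨N, hN⟩ := exists_nat_gt ((m - d) * (vBoundary G A).ncard)
    obtain ⟨T, hT, hTfin, hTc⟩ := Set.Infinite.exists_subset_ncard_eq hinf N
    refine ⟨T, hTfin, ?_, ?_, ?_⟩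
    · rw [Set.disjoint_left]
      exact fun y hy hyA => (hT hy).2 hyA
    · exact fun y hy => ⟨x, hx, (hT hy).1⟩
    · refine hN.trans_le ?_
      have hxt : x ∈ t := by simpa [ht] using hx
      refine le_trans ?_ (Finset.single_le_sum
        (f := fun x => ((G.neighborSet x ∩ T).ncard : ℝ)) (fun _ _ => by positivity) hxt)
      have : G.neighborSet x ∩ T = T := Set.inter_eq_right.2 fun y hy => (hT hy).1
      simp [this, hTc]

/-- Cutting off one end, away from a finite set. -/
theorem exists_cut {k : ℕ} {m : ℝ} {G : SimpleGraph V} {r : ℕ → V} (hr : IsRay G r)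
    (hdom : (Dom G r).encard < (k : ℕ∞)) (hrel : (m : EReal) < (relDegree G r : EReal))
    {P : Set V} (hP : P.Finite) :
    ∃ (R : Set V) (F : Finset V) (T : Set V),
      (G.induce R).Connected ∧ (F : Set V) ⊆ R ∧ F.Nonempty ∧ Disjoint P R ∧
      Disjoint (Dom G r) R ∧
      (∀ x ∈ R, x ∉ F → ∀ y, G.Adj x y → y ∉ R → y ∈ Dom G r) ∧
      (∀ᶠ n in Filter.atTop, r n ∈ R ∧ r n ∉ F) ∧
      T.Finite ∧ Disjoint T R ∧ (∀ t ∈ T, ∃ x ∈ F, G.Adj x t) ∧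
      (m - k + 1) * F.card < ∑ v ∈ F, ((G.neighborSet v ∩ T).ncard : ℝ) := by
  classical
  have hDfin : (Dom G r).Finite := Set.finite_of_encard_le_coe hdom.le
  obtain ⟨N, hN⟩ := Filter.eventually_atTop.1 (hr.eventually_notMem hDfin)
  set H := Gmin G r with hH
  let f : ℕ → ((Dom G r)ᶜ : Set V) := fun n => ⟨r (N + n), hN _ (by omega)⟩
  have hf : IsRay H f := by
    refine ⟨fun a b hab => ?_, fun n => ?_⟩
    · have := congrArg Subtype.val hab
      simpa using hr.inj this
    · exact hr.adj (N + n)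
  have hequiv : ∀ j, EquivRay G (fun n => ((f (j + n) : ((Dom G r)ᶜ : Set V)) : V)) r := by
    intro j S hS
    obtain ⟨M, hM⟩ := Filter.eventually_atTop.1 (hr.eventually_notMem hS)
    exact ⟨M, N + (j + M), ReachAvoid.refl (hM _ (by omega))⟩
  have hin : ∀ j, InDeletedEnd G r (fun n => f (j + n)) := fun j => ⟨hf.tail j, hequiv j⟩
  have hreach : ∀ (S : Set V) (u v : ((Dom G r)ᶜ : Set V)),
      ReachAvoid H (Subtype.val ⁻¹' S) u v → ReachAvoid G S u v := by
    rintro S u v ⟨p, hp⟩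
    refine ⟨p.map (SimpleGraph.Embedding.induce _).toHom, fun z hz => ?_⟩
    have e := SimpleGraph.Walk.support_map
      (SimpleGraph.Embedding.induce (G := G) ((Dom G r)ᶜ : Set V)).toHom p
    have hz2 := (congrArg (fun l => z ∈ l) e).mp hz
    obtain ⟨w, hw, rfl⟩ := List.mem_map.1 hz2
    exact hp w hw
  have hund : ∀ v, ∃ S : Set ((Dom G r)ᶜ : Set V), S.Finite ∧ v ∉ S ∧ v ∉ Cof H f S := by
    intro v
    obtain ⟨S, hS, hvS, hvC⟩ := exists_sep_of_not_dom hr v.2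
    refine ⟨Subtype.val ⁻¹' S, hS.preimage Subtype.val_injective.injOn, hvS, fun hC => hvC ?_⟩
    refine mem_Cof_of_frequently hr hS fun M => ?_
    obtain ⟨n, hn, hn'⟩ := (Filter.Eventually.and hC (Filter.eventually_ge_atTop M)).exists
    exact ⟨N + n, by omega, hreach S _ _ hn⟩
  have hP0 : (insert (f 0) (Subtype.val ⁻¹' P)).Finite :=
    (hP.preimage Subtype.val_injective.injOn).insert _
  obtain ⟨A0, hA0P, hA0, -⟩ := exists_region hf hund hP0 ⟨f 0, Set.mem_insert _ _,
    Filter.Eventually.of_forall fun n => hf.reach (N := 0) (by simp) (by simp) (by simp)⟩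
  obtain ⟨A, -, hinj, hreg, hsub0, hsub, hminsep⟩ := hA0.seq hf hund
  have hconv : Converges G r A := by
    refine ⟨hinj, fun i => ⟨(hreg i).conn, (hreg i).fin, ?_⟩, hsub, hminsep⟩
    obtain ⟨j, hj⟩ := Filter.eventually_atTop.1 (hreg i).ev
    refine ⟨_, hin j, ?_⟩
    rintro _ ⟨n, rfl⟩
    exact (hj _ (by omega)).1
  have hif : ¬ ((Dom G r).Infinite ∨ ¬ ∃ f, InDeletedEnd G r f) := by
    push Not
    exact ⟨by simpa using hDfin, _, hin 0⟩
  set d := (Dom G r).ncard with hd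
  have hdenc : ((Dom G r).encard : ℝ≥0∞) = (d : ℝ≥0∞) := by
    rw [← hDfin.cast_ncard_eq]; simp only [ENat.toENNReal_coe]; rfl
  have hdk : d + 1 ≤ k := by
    rw [← hDfin.cast_ncard_eq] at hdom
    exact_mod_cast hdom
  obtain ⟨i, hi⟩ : ∃ i, (m : EReal) < (((d : ℝ≥0∞) + bratio H (A i) : ℝ≥0∞) : EReal) := by
    by_contra hcon
    push Not at hcon
    apply not_le.2 hrel
    have hm : ((d : ℝ≥0∞) + bratio H (A 0)).toReal ≤ m := (coe_le_iff.1 (hcon 0)).2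
    have hm0 : 0 ≤ m := le_trans ENNReal.toReal_nonneg hm
    have hle : relDegree G r ≤ ENNReal.ofReal m := by
      rw [relDegree, if_neg hif, hdenc]
      have hdm : (d : ℝ≥0∞) ≤ ENNReal.ofReal m := le_self_add.trans (coe_add_ofReal (hcon 0))
      have hlim : (⨅ A : {A : ℕ → Set ((Dom G r)ᶜ : Set V) // Converges G r A},
        Filter.atTop.liminf fun i => bratio (Gmin G r) (A.1 i)) ≤ ENNReal.ofReal m - d := by
        refine (iInf_le _ ⟨A, hconv⟩).trans ?_
        refine Filter.liminf_le_of_frequently_le' (Filter.Frequently.of_forall fun i => ?_)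
        have := coe_add_ofReal (hcon i)
        exact ENNReal.le_sub_of_add_le_left (by simp) this
      calc _ ≤ (d : ℝ≥0∞) + (ENNReal.ofReal m - d) := by gcongr
        _ = ENNReal.ofReal m := add_tsub_cancel_of_le hdm
    rw [coe_le_iff]
    exact ⟨ne_top_of_le_ne_top ENNReal.ofReal_ne_top hle,
      ENNReal.toReal_le_of_le_ofReal hm0 hle⟩
  obtain ⟨T, hTfin, hTA, hTadj, hTsum⟩ := ratio_witness (hreg i).fin (hreg i).ne hi
  set t := (hreg i).fin.toFinset with ht
  have hmemt : ∀ x, x ∈ t ↔ x ∈ vBoundary H (A i) := fun x => by simp [ht]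
  refine ⟨Subtype.val '' (A i), t.map (Function.Embedding.subtype _), Subtype.val '' T,
    ?_, ?_, ?_, ?_, ?_, ?_, ?_, hTfin.image _, ?_, ?_, ?_⟩
  · rw [connected_iff_reach]
    obtain ⟨⟨x, hx⟩, hc⟩ := connected_iff_reach.1 (hreg i).conn
    refine ⟨⟨x, x, hx, rfl⟩, ?_⟩
    rintro _ ⟨u, hu, rfl⟩ _ ⟨v, hv, rfl⟩
    apply hreach
    refine (hc u hu v hv).mono ?_
    intro w hw hwA
    exact hw ⟨w, hwA, rfl⟩
  · intro x hx
    simp only [Finset.coe_map, Set.mem_image, Finset.mem_coe] at hx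
    obtain ⟨y, hy, rfl⟩ := hx
    exact ⟨y, ((hmemt y).1 hy).1, rfl⟩
  · obtain ⟨x, hx⟩ := (hreg i).ne
    exact ⟨x, Finset.mem_map_of_mem _ ((hmemt x).2 hx)⟩
  · rw [Set.disjoint_left]
    rintro x hx ⟨y, hy, rfl⟩
    exact Set.disjoint_left.1 hA0P (Set.mem_insert_of_mem _ hx) (hsub0 i hy)
  · rw [Set.disjoint_left]
    rintro x hx ⟨y, hy, rfl⟩
    exact y.2 hx
  · rintro _ ⟨x, hx, rfl⟩ hxF y hxy hyR
    by_contra hyD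
    apply hxF
    refine Finset.mem_map_of_mem _ ((hmemt x).2 ⟨hx, ⟨y, hyD⟩, ?_, hxy⟩)
    intro h
    exact hyR ⟨_, h, rfl⟩
  · obtain ⟨j, hj⟩ := Filter.eventually_atTop.1 (hreg i).ev
    refine Filter.eventually_atTop.2 ⟨N + j, fun n hn => ?_⟩
    have hrn : r n = (f (n - N) : V) := by
      simp only [f]; congr 1; omega
    have := hj (n - N) (by omega)
    rw [hrn]
    refine ⟨⟨_, this.1, rfl⟩, fun h => this.2 ?_⟩
    obtain ⟨y, hy, hyf⟩ := Finset.mem_map.1 h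
    rw [← Subtype.val_injective hyf]
    exact (hmemt y).1 hy
  · rw [Set.disjoint_left]
    rintro _ ⟨y, hy, rfl⟩ ⟨z, hz, hzy⟩
    rw [Subtype.val_injective hzy] at hz
    exact Set.disjoint_left.1 hTA hy hz
  · rintro _ ⟨y, hy, rfl⟩
    obtain ⟨x, hx, hxy⟩ := hTadj y hy
    exact ⟨x, Finset.mem_map_of_mem _ ((hmemt x).2 hx), hxy⟩
  · rw [Finset.card_map, Finset.sum_map]
    have hc : (vBoundary H (A i)).ncard = t.card := Set.ncard_eq_toFinset_card _ (hreg i).fin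
    rw [hc] at hTsum
    have h1 : (m - k + 1) * t.card ≤ (m - d) * t.card := by
      have : (d : ℝ) + 1 ≤ k := by exact_mod_cast hdk
      gcongr
      linarith
    refine h1.trans_lt (hTsum.trans_le ?_)
    refine Finset.sum_le_sum fun x _ => ?_
    norm_cast
    rw [← Set.ncard_image_of_injective _ Subtype.val_injective]
    refine Set.ncard_le_ncard ?_ ((hTfin.image _).inter_of_right _)
    rintro _ ⟨y, ⟨hy1, hy2⟩, rfl⟩
    exact ⟨hy1, y, hy2, rfl⟩

/-! ### A directed version of König's lemma -/

theorem konig {α : Type*} (rel : α → α → Prop) (hfin : ∀ v, {w | rel v w}.Finite)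
    {X : Set α} (hX : X.Finite) (hinf : {w | ∃ x ∈ X, Relation.ReflTransGen rel x w}.Infinite) :
    ∃ f : ℕ → α, Function.Injective f ∧ ∀ n, rel (f n) (f (n + 1)) := by
  classical
  -- `L n w`: `w` can be reached in exactly `n` steps
  let L : ℕ → Set α := fun n => Nat.rec (motive := fun _ => Set α) X (fun _ Y => {w | ∃ v ∈ Y, rel v w}) n
  have hL0 : L 0 = X := rfl
  have hLs : ∀ n, L (n + 1) = {w | ∃ v ∈ L n, rel v w} := fun n => rfl
  have hreach : ∀ w, (∃ x ∈ X, Relation.ReflTransGen rel x w) → ∃ n, w ∈ L n := by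
    rintro w ⟨x, hx, hxw⟩
    induction hxw with
    | refl => exact ⟨0, hx⟩
    | tail _ h ih =>
      obtain ⟨n, hn⟩ := ih
      exact ⟨n + 1, _, hn, h⟩
  -- first level
  let fl : α → ℕ → Prop := fun v n => v ∈ L n ∧ ∀ j < n, v ∉ L j
  have hdesc : ∀ n w, fl w n → ∃ x ∈ X, Relation.ReflTransGen
      (fun v w => rel v w ∧ ∃ n, fl v n ∧ fl w (n + 1)) x w := by
    intro n
    induction n with
    | zero => exact fun w hw => ⟨w, hw.1, Relation.ReflTransGen.refl⟩
    | succ n ih =>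
      rintro w hw
      obtain ⟨v, hv, hvw⟩ := hw.1
      have hflv : fl v n := ⟨hv, fun j hj hvj => hw.2 (j + 1) (by omega) ⟨v, hvj, hvw⟩⟩
      obtain ⟨x, hx, hxv⟩ := ih v hflv
      exact ⟨x, hx, hxv.tail ⟨hvw, n, hflv, hw⟩⟩
  set E' : α → α → Prop := fun v w => rel v w ∧ ∃ n, fl v n ∧ fl w (n + 1) with hE'
  have hflex : ∀ w, (∃ n, w ∈ L n) → ∃ n, fl w n := by
    intro w hw
    have hw' : ∃ n, (fun n => w ∈ L n) n := hw
    exact ⟨Nat.find hw', Nat.find_spec hw', fun j hj => Nat.find_min hw' hj⟩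
  have huniq : ∀ w a b, fl w a → fl w b → a = b := by
    intro w a b ha hb
    rcases lt_trichotomy a b with h | h | h
    · exact absurd ha.1 (hb.2 a h)
    · exact h
    · exact absurd hb.1 (ha.2 b h)
  -- start
  have hstart : ∃ x ∈ X, {w | Relation.ReflTransGen E' x w}.Infinite := by
    by_contra hcon
    push Not at hcon
    refine hinf ((hX.biUnion hcon).subset ?_)
    intro w hw
    obtain ⟨n, hn⟩ := hflex w (hreach w hw)
    obtain ⟨x, hx, h⟩ := hdesc n w hn
    exact Set.mem_iUnion₂.2 ⟨x, hx, h⟩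
  have hstep : ∀ v, {w | Relation.ReflTransGen E' v w}.Infinite →
      ∃ u, E' v u ∧ {w | Relation.ReflTransGen E' u w}.Infinite := by
    intro v hv
    by_contra hcon
    push Not at hcon
    have h1 : {u | E' v u}.Finite := (hfin v).subset fun u hu => hu.1
    refine hv (((h1.biUnion (t := fun u => {w | Relation.ReflTransGen E' u w})
      (fun u hu => hcon u hu)).insert v).subset ?_)
    intro w hw
    rcases Relation.ReflTransGen.cases_head hw with h | ⟨u, hu, huw⟩
    · exact Or.inl h.symm
    · exact Or.inr (Set.mem_iUnion₂.2 ⟨u, hu, huw⟩)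
  obtain ⟨x, hx, hxinf⟩ := hstart
  choose! nx hnx1 hnx2 using hstep
  have hinfn : ∀ n, {w | Relation.ReflTransGen E' (nx^[n] x) w}.Infinite := by
    intro n
    induction n with
    | zero => exact hxinf
    | succ n ih => rw [Function.iterate_succ_apply']; exact hnx2 _ ih
  have hE : ∀ n, E' (nx^[n] x) (nx^[n + 1] x) := fun n => by
    rw [Function.iterate_succ_apply']; exact hnx1 _ (hinfn n)
  have hlev : ∀ n, fl (nx^[n] x) n := by
    intro n
    induction n with
    | zero => exact ⟨hx, fun j hj => absurd hj (by omega)⟩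
    | succ n ih =>
      obtain ⟨-, a, ha, hb⟩ := hE n
      rw [huniq _ _ _ ih ha]
      rwa [← huniq _ _ _ ih ha] at hb ⊢
  refine ⟨fun n => nx^[n] x, fun a b hab => ?_, fun n => (hE n).1⟩
  have hb := hlev b
  simp only at hab
  rw [← hab] at hb
  exact huniq _ _ _ (hlev a) hb

/-- A finite subset of a connected set lies in a finite connected subset. -/
theorem exists_finite_conn {G : SimpleGraph V} {R : Set V} (hR : (G.induce R).Connected)
    {F : Finset V} (hF : (F : Set V) ⊆ R) :
    ∃ K : Set V, K.Finite ∧ (F : Set V) ⊆ K ∧ K ⊆ R ∧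
      ∀ x ∈ F, ∀ y ∈ F, ReachAvoid G Kᶜ x y := by
  have h := (connected_iff_reach.1 hR).2
  have h' : ∀ x : F, ∀ y : F, ReachAvoid G Rᶜ x y := fun x y => h x (hF x.2) y (hF y.2)
  choose p hp using h'
  refine ⟨⋃ x : F, ⋃ y : F, {z | z ∈ (p x y).support}, ?_, ?_, ?_, ?_⟩
  · exact Set.finite_iUnion fun x => Set.finite_iUnion fun y => List.finite_toSet _
  · intro x hx
    exact Set.mem_iUnion₂.2 ⟨⟨x, hx⟩, ⟨x, hx⟩, SimpleGraph.Walk.start_mem_support _⟩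
  · intro z hz
    obtain ⟨x, y, hz⟩ := Set.mem_iUnion₂.1 hz
    simpa using hp x y z hz
  · intro x hx y hy
    refine ⟨p ⟨x, hx⟩ ⟨y, hy⟩, fun z hz hz' => hz' ?_⟩
    exact Set.mem_iUnion₂.2 ⟨_, _, hz⟩

/-! ### States of the construction -/

/-- `P` is a set of protected vertices, `U` the set of vertices cut off so far, and `C` the
set of pairs (region, boundary) used so far. -/
structure Good (k : ℕ) (m : ℝ) (G : SimpleGraph V) (P U : Set V)
    (C : Set (Set V × Finset V)) : Prop where
  disj : Disjoint P U
  bdry : ∀ x ∈ U, ∀ y, G.Adj x y → y ∉ U → y ∈ P ∧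
    ((∃ T : Finset V, (T : Set V) ⊆ G.neighborSet y ∩ P ∧ m < T.card) ∨ ∃ c ∈ C, y ∈ c.2)
  conn : ∀ c ∈ C, (G.induce c.1).Connected
  sub : ∀ c ∈ C, (c.2 : Set V) ⊆ c.1
  subP : ∀ c ∈ C, (c.2 : Set V) ⊆ P
  int : ∀ c ∈ C, ∀ x ∈ c.1, x ∉ c.2 → x ∈ U
  ne : ∀ c ∈ C, c.2.Nonempty
  sum : ∀ c ∈ C, ∃ T : Finset V, (T : Set V) ⊆ P ∧
    (m - k + 1) * c.2.card < ∑ v ∈ c.2, ((G.neighborSet v ∩ T).ncard : ℝ)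
  dis : ∀ c ∈ C, ∀ c' ∈ C, c ≠ c' → Disjoint c.1 c'.1

/-- Dominating vertices lie outside `U` and have many neighbours outside `U`. -/
theorem dom_outside {G : SimpleGraph V} {r : ℕ → V} (hr : IsRay G r) {P U : Set V}
    (hP : P.Finite) (hU : ∀ x ∈ U, ∀ y, G.Adj x y → y ∉ U → y ∈ P)
    (hout : ∀ᶠ n in Filter.atTop, r n ∉ U) {v : V} (hv : v ∈ Dom G r) :
    v ∉ U ∧ (G.neighborSet v \ U).Infinite := by
  classical
  obtain ⟨g, p, hg, hp, hdis⟩ := hv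
  obtain ⟨N, hN⟩ := Filter.eventually_atTop.1
    (hout.and (hr.eventually_notMem (Set.finite_singleton v)))
  -- every finite set is avoided by some second vertex
  have key : ∀ S : Set V, S.Finite → ∃ w, G.Adj v w ∧ w ∉ U ∧ w ∉ S ∧ w ∉ P := by
    intro S hS
    have hbad : {n | ∃ x ∈ (p n).support, x ≠ v ∧ x ∈ S ∪ P}.Finite := by
      have hSP := hS.union hP
      by_contra hinf
      have hinf' : Set.Infinite {n | ∃ x ∈ (p n).support, x ≠ v ∧ x ∈ S ∪ P} := hinf
      have : Nonempty V := ⟨v⟩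
      choose! x hx1 hx2 hx3 using fun n
        (hn : n ∈ {n | ∃ x ∈ (p n).support, x ≠ v ∧ x ∈ S ∪ P}) => hn
      obtain ⟨a, ha, b, hb, hab, he⟩ := hinf'.exists_ne_map_eq_of_mapsTo (f := x)
        (fun n hn => hx3 n hn) hSP
      exact hx2 a ha (hdis a b hab _ (hx1 a ha) (by rw [he]; exact hx1 b hb))
    have hbad2 : {n | g n < N}.Finite := (Set.finite_Iio N).preimage hg.injOn
    obtain ⟨n, hn⟩ := (hbad.union hbad2).exists_notMem
    have hn1 : ∀ x ∈ (p n).support, x ≠ v → x ∉ S ∪ P := by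
      intro x hx hxv hxS
      exact hn (Or.inl ⟨x, hx, hxv, hxS⟩)
    have hn2 : N ≤ g n := by
      by_contra h
      exact hn (Or.inr (by simpa using h))
    obtain ⟨hend1, hend2⟩ := hN _ hn2
    have hpath := hp n
    generalize hq : p n = q at *
    clear hq
    cases q with
    | nil => exact absurd rfl hend2
    | @cons _ w _ hvw q =>
      rw [SimpleGraph.Walk.cons_isPath_iff] at hpath
      have hw : w ≠ v := hvw.ne'
      have hwS := hn1 w (by simp) hw
      refine ⟨w, hvw, ?_, fun h => hwS (Or.inl h), fun h => hwS (Or.inr h)⟩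
      intro hwU
      have hra : ReachAvoid G P w (r (g n)) := ⟨q, fun x hx hxP =>
        hn1 x (by simp [hx]) (fun h => hpath.2 (h ▸ hx)) (Or.inr hxP)⟩
      exact hend1 (hra.closed U hwU
        (fun x y hx _ hxy hy => by_contra fun hyU => hy (hU x hx y hxy hyU)))
  constructor
  · intro hvU
    obtain ⟨w, hvw, hwU, -, hwP⟩ := key ∅ Set.finite_empty
    exact hwP (hU v hvU w hvw hwU)
  · intro hfin
    obtain ⟨w, hvw, hwU, hw, -⟩ := key _ hfin
    exact hw ⟨hvw, hwU⟩

/-- One step of the construction. -/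
theorem Good.step {k : ℕ} {m : ℝ} {G : SimpleGraph V} {P U : Set V}
    {C : Set (Set V × Finset V)} (h : Good k m G P U C) (hP : P.Finite) {r : ℕ → V}
    (hr : IsRay G r) (hdom : (Dom G r).encard < (k : ℕ∞))
    (hrel : (m : EReal) < (relDegree G r : EReal)) :
    ∃ P' U' C', Good k m G P' U' C' ∧ P'.Finite ∧ P ⊆ P' ∧ U ⊆ U' ∧ C ⊆ C' ∧
      ∀ᶠ n in Filter.atTop, r n ∈ U' := by
  classical
  have hU : ∀ x ∈ U, ∀ y, G.Adj x y → y ∉ U → y ∈ P := fun x hx y hxy hy =>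
    (h.bdry x hx y hxy hy).1
  rcases hr.eventually_in_or_out hP hU with hin | hout
  · exact ⟨P, U, C, h, hP, le_rfl, le_rfl, le_rfl, hin⟩
  have hDfin : (Dom G r).Finite := Set.finite_of_encard_le_coe hdom.le
  have hD := fun v (hv : v ∈ Dom G r) => dom_outside hr hP hU hout hv
  obtain ⟨M, hM⟩ := exists_nat_gt m
  have hTv : ∀ v ∈ Dom G r, ∃ T : Finset V, (T : Set V) ⊆ G.neighborSet v \ U ∧ T.card = M :=
    fun v hv => (hD v hv).2.exists_subset_card_eq M
  choose! Tv hTv1 hTv2 using hTv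
  have hQfin : (⋃ v ∈ Dom G r, (Tv v : Set V)).Finite :=
    hDfin.biUnion fun v _ => (Tv v).finite_toSet
  set Q := ⋃ v ∈ Dom G r, (Tv v : Set V) with hQ
  have hQU : Disjoint Q U := by
    rw [Set.disjoint_left]
    intro x hx hxU
    obtain ⟨v, hv, hxv⟩ := Set.mem_iUnion₂.1 hx
    exact (hTv1 v hv hxv).2 hxU
  obtain ⟨R, F, T, hconn, hFR, hFne, hPR, hDR, hRbd, hev, hTfin, hTR, hTadj, hsum⟩ :=
    exists_cut hr hdom hrel (hP.union hQfin)
  have hPR' : ∀ x ∈ P, x ∉ R := fun x hx hxR => Set.disjoint_left.1 hPR (Or.inl hx) hxR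
  have hQR' : ∀ x ∈ Q, x ∉ R := fun x hx hxR => Set.disjoint_left.1 hPR (Or.inr hx) hxR
  have hRU : ∀ x ∈ R, x ∉ U := by
    intro x hx hxU
    obtain ⟨n, hn1, hn2⟩ := (hev.and hout).exists
    refine hn2 (((connected_iff_reach.1 hconn).2 x hx _ hn1.1).closed U hxU ?_)
    intro a b ha _ hab hb
    by_contra hbU
    exact hPR' b (hU a ha b hab hbU) (by simpa using hb)
  have hTU : ∀ x ∈ T, x ∉ U := by
    intro x hx hxU
    obtain ⟨y, hy, hyx⟩ := hTadj x hx
    exact hPR' y (hU x hxU y hyx.symm (hRU y (hFR hy))) (hFR hy)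
  have hRC : ∀ c ∈ C, Disjoint R c.1 := by
    intro c hc
    rw [Set.disjoint_left]
    intro x hx hxc
    by_cases hxF : x ∈ c.2
    · exact hPR' x (h.subP c hc hxF) hx
    · exact hRU x hx (h.int c hc x hxc hxF)
  refine ⟨P ∪ Q ∪ Dom G r ∪ F ∪ T, U ∪ (R \ F), insert (R, F) C, ?_, ?_, ?_, ?_, ?_, ?_⟩
  · have hPsub : P ⊆ P ∪ Q ∪ Dom G r ∪ F ∪ T := fun x hx =>
      Or.inl (Or.inl (Or.inl (Or.inl hx)))
    have hQsub : Q ⊆ P ∪ Q ∪ Dom G r ∪ F ∪ T := fun x hx =>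
      Or.inl (Or.inl (Or.inl (Or.inr hx)))
    have hDsub : Dom G r ⊆ P ∪ Q ∪ Dom G r ∪ F ∪ T := fun x hx =>
      Or.inl (Or.inl (Or.inr hx))
    have hFsub : (F : Set V) ⊆ P ∪ Q ∪ Dom G r ∪ F ∪ T := fun x hx => Or.inl (Or.inr hx)
    have hTsub : T ⊆ P ∪ Q ∪ Dom G r ∪ F ∪ T := fun x hx => Or.inr hx
    refine ⟨?_, ?_, ?_, ?_, ?_, ?_, ?_, ?_, ?_⟩
    · rw [Set.disjoint_left]
      rintro x ((((hx | hx) | hx) | hx) | hx) (hxU | ⟨hxR, hxF⟩)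
      · exact Set.disjoint_left.1 h.disj hx hxU
      · exact hPR' x hx hxR
      · exact Set.disjoint_left.1 hQU hx hxU
      · exact hQR' x hx hxR
      · exact (hD x hx).1 hxU
      · exact Set.disjoint_left.1 hDR hx hxR
      · exact hRU x (hFR hx) hxU
      · exact hxF hx
      · exact hTU x hx hxU
      · exact Set.disjoint_left.1 hTR hx hxR
    · rintro x (hx | ⟨hxR, hxF⟩) y hxy hy
      · obtain ⟨hyP, hor⟩ := h.bdry x hx y hxy (fun h => hy (Or.inl h))
        refine ⟨hPsub hyP, ?_⟩
        rcases hor with ⟨S, hS, hSm⟩ | ⟨c, hc, hyc⟩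
        · exact Or.inl ⟨S, hS.trans (Set.inter_subset_inter_right _ hPsub), hSm⟩
        · exact Or.inr ⟨c, Or.inr hc, hyc⟩
      · by_cases hyR : y ∈ R
        · have hyF : y ∈ F := by
            by_contra hyF
            exact hy (Or.inr ⟨hyR, hyF⟩)
          exact ⟨hFsub hyF, Or.inr ⟨(R, F), Or.inl rfl, hyF⟩⟩
        · have hyD := hRbd x hxR hxF y hxy hyR
          refine ⟨hDsub hyD, Or.inl ⟨Tv y, fun z hz => ⟨(hTv1 y hyD hz).1, hQsub ?_⟩, ?_⟩⟩
          · exact Set.mem_iUnion₂.2 ⟨y, hyD, hz⟩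
          · rw [hTv2 y hyD]; exact hM
    · rintro c (rfl | hc)
      · exact hconn
      · exact h.conn c hc
    · rintro c (rfl | hc)
      · exact hFR
      · exact h.sub c hc
    · rintro c (rfl | hc)
      · exact hFsub
      · exact (h.subP c hc).trans hPsub
    · rintro c (rfl | hc) x hx hxF
      · exact Or.inr ⟨hx, hxF⟩
      · exact Or.inl (h.int c hc x hx hxF)
    · rintro c (rfl | hc)
      · exact hFne
      · exact h.ne c hc
    · rintro c (rfl | hc)
      · refine ⟨hTfin.toFinset, ?_, ?_⟩
        · rw [hTfin.coe_toFinset]; exact hTsub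
        · rw [hTfin.coe_toFinset]; exact hsum
      · obtain ⟨S, hS, hS'⟩ := h.sum c hc
        exact ⟨S, hS.trans hPsub, hS'⟩
    · rintro c (rfl | hc) c' (rfl | hc') hne
      · exact absurd rfl hne
      · exact hRC c' hc'
      · exact (hRC c hc).symm
      · exact h.dis c hc c' hc' hne
  · exact ((((hP.union hQfin).union hDfin).union F.finite_toSet).union hTfin)
  · exact fun x hx => Or.inl (Or.inl (Or.inl (Or.inl hx)))
  · exact Set.subset_union_left
  · exact Set.subset_insert _ _
  · exact hev.mono fun n hn => Or.inr hn

/-- The final step: shrink to a finite subgraph. -/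
theorem Good.finish {k : ℕ} {m : ℝ} {G : SimpleGraph V} {P U : Set V}
    {C : Set (Set V × Finset V)} (h : Good k m G P U C)
    (hdeg : ∀ v, (m : EReal) < degER G v)
    (hrays : ∀ f : ℕ → V, IsRay G f → ∀ᶠ n in Filter.atTop, f n ∈ U)
    {X : Set V} (hX : X.Finite) (hXP : X ⊆ P) :
    ∃ (A : Set V) (F : Set (Set V)),
      (∀ F₁ ∈ F, F₁.Finite) ∧ F.PairwiseDisjoint id ∧
      X ∪ ⋃₀ F ⊆ A ∧
      (∃ H : Set V → Set V, (∀ F₁ ∈ F, (G.induce (H F₁)).Connected ∧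
          H F₁ ∩ A = F₁) ∧ F.PairwiseDisjoint H) ∧
      (∀ v ∈ A, (((G.neighborSet v ∩ A).encard : ℝ≥0∞) : EReal) ≤ (m : EReal) →
          ∃ F₁ ∈ F, v ∈ F₁ ∧ m - k + 1 < avgDegIn G A F₁) ∧
      (∀ f : ℕ → V, IsRay G f → (Set.range f ∩ A).Finite) := by
  classical
  have hPU : ∀ x ∈ P, x ∉ U := fun x hx hxU => Set.disjoint_left.1 h.disj hx hxU
  have huniq : ∀ c ∈ C, ∀ c' ∈ C, ∀ x, x ∈ c.1 → x ∈ c'.1 → c = c' := by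
    intro c hc c' hc' x hx hx'
    by_contra hne
    exact Set.disjoint_left.1 (h.dis c hc c' hc' hne) hx hx'
  choose! Tc hTcP hTcsum using h.sum
  choose! K hKfin hFK hKR hKreach using fun c (hc : c ∈ C) =>
    exists_finite_conn (h.conn c hc) (h.sub c hc)
  -- neighbours to be kept
  have hT : ∀ v, v ∉ U → ∃ T : Finset V, (T : Set V) ⊆ Uᶜ ∧ (∀ c ∈ C, v ∈ c.2 → Tc c ⊆ T) ∧
      ((∀ c ∈ C, v ∉ c.2) → ∃ T' ⊆ T, (T' : Set V) ⊆ G.neighborSet v ∧ m < T'.card) := by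
    intro v hv
    by_cases hvF : ∃ c ∈ C, v ∈ c.2
    · obtain ⟨c, hc, hvc⟩ := hvF
      refine ⟨Tc c, fun x hx => hPU x (hTcP c hc hx), ?_, fun hn => absurd hvc (hn c hc)⟩
      intro c' hc' hvc'
      rw [huniq c' hc' c hc v (h.sub c' hc' hvc') (h.sub c hc hvc)]
    · push Not at hvF
      suffices hs : ∃ T : Finset V, (T : Set V) ⊆ G.neighborSet v ∩ Uᶜ ∧ m < T.card by
        obtain ⟨T, hT1, hT2⟩ := hs
        exact ⟨T, fun x hx => (hT1 hx).2, fun c hc hvc => absurd hvc (hvF c hc),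
          fun _ => ⟨T, le_rfl, fun x hx => (hT1 hx).1, hT2⟩⟩
      by_cases hnb : ∃ x ∈ U, G.Adj x v
      · obtain ⟨x, hx, hxv⟩ := hnb
        rcases (h.bdry x hx v hxv hv).2 with ⟨T, hT1, hT2⟩ | ⟨c, hc, hvc⟩
        · exact ⟨T, hT1.trans (Set.inter_subset_inter_right _ hPU), hT2⟩
        · exact absurd hvc (hvF c hc)
      · push Not at hnb
        have hsub : G.neighborSet v ∩ Uᶜ = G.neighborSet v :=
          Set.inter_eq_left.2 fun x hx hxU => hnb x hxU (G.adj_symm hx)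
        rw [hsub]
        by_cases hfin : (G.neighborSet v).Finite
        · refine ⟨hfin.toFinset, by simp, ?_⟩
          by_contra hcon
          push Not at hcon
          apply not_le.2 (hdeg v)
          rw [degER, coe_le_iff, ← hfin.cast_ncard_eq, Set.ncard_eq_toFinset_card _ hfin]
          simpa using hcon
        · obtain ⟨M, hM⟩ := exists_nat_gt m
          obtain ⟨T, hT1, hT2⟩ := Set.Infinite.exists_subset_card_eq hfin M
          exact ⟨T, hT1, by rw [hT2]; exact hM⟩
  choose! Tv hTvU hTvF hTvdeg using hT
  let rel : V → V → Prop := fun v w => G.Adj v w ∧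
    ((v ∉ U ∧ w ∈ Tv v) ∨ ∃ c ∈ C, v ∈ K c ∧ w ∈ K c)
  have hrelfin : ∀ v, {w | rel v w}.Finite := by
    intro v
    have h1 : {w | ∃ c ∈ C, v ∈ K c ∧ w ∈ K c}.Finite := by
      by_cases hc : ∃ c ∈ C, v ∈ K c
      · obtain ⟨c, hc, hvc⟩ := hc
        refine (hKfin c hc).subset ?_
        rintro w ⟨c', hc', hvc', hw⟩
        rwa [huniq c' hc' c hc v (hKR c' hc' hvc') (hKR c hc hvc)] at hw
      · convert Set.finite_empty
        ext w
        simp only [Set.mem_ofPred_eq, Set.mem_empty_iff_false, iff_false]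
        rintro ⟨c', hc', hvc', -⟩
        exact hc ⟨c', hc', hvc'⟩
    refine ((Tv v).finite_toSet.union h1).subset ?_
    rintro w ⟨-, ⟨-, hw⟩ | hw⟩
    · exact Or.inl hw
    · exact Or.inr hw
  set B := {w | ∃ x ∈ X, Relation.ReflTransGen rel x w} with hB
  have hBfin : B.Finite := by
    by_contra hinf
    obtain ⟨f, hfinj, hfrel⟩ := konig rel hrelfin hX hinf
    obtain ⟨N, hN⟩ := Filter.eventually_atTop.1 (hrays f ⟨hfinj, fun n => (hfrel n).1⟩)
    have hs : ∀ n ≥ N, ∃ c ∈ C, f n ∈ K c ∧ f (n + 1) ∈ K c := by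
      intro n hn
      rcases (hfrel n).2 with h1 | h1
      · exact absurd (hN n hn) h1.1
      · exact h1
    obtain ⟨c, hc, hcN, -⟩ := hs N le_rfl
    have hall : ∀ n, N ≤ n → f n ∈ K c := by
      intro n hn
      induction n, hn using Nat.le_induction with
      | base => exact hcN
      | succ n hn ih =>
        obtain ⟨c', hc', h1, h2⟩ := hs n hn
        rwa [huniq c' hc' c hc (f n) (hKR c' hc' h1) (hKR c hc ih)] at h2
    have : (f ⁻¹' (K c)).Finite := (hKfin c hc).preimage hfinj.injOn
    exact (Set.Ici_infinite N) (this.subset fun n hn => hall n hn)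
  have hXB : X ⊆ B := fun x hx => ⟨x, hx, Relation.ReflTransGen.refl⟩
  have hBrel : ∀ v w, v ∈ B → rel v w → w ∈ B := by
    rintro v w ⟨x, hx, hxv⟩ hvw
    exact ⟨x, hx, hxv.tail hvw⟩
  have hBF : ∀ c ∈ C, ∀ v ∈ c.2, v ∈ B → ∀ w ∈ c.2, w ∈ B := by
    intro c hc v hv hvB w hw
    refine (hKreach c hc v hv w hw).closed B hvB ?_
    intro x y hx hxK hxy hyK
    exact hBrel x y hx ⟨hxy, Or.inr ⟨c, hc, by simpa using hxK, by simpa using hyK⟩⟩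
  have hBT : ∀ v ∈ B, v ∉ U → ∀ w ∈ Tv v, G.Adj v w → w ∈ B := fun v hv hvU w hw hvw =>
    hBrel v w hv ⟨hvw, Or.inl ⟨hvU, hw⟩⟩
  have hAfin : (B \ U).Finite := hBfin.sdiff
  refine ⟨B \ U, {F₁ | ∃ c ∈ C, F₁ = c.2 ∧ (c.2 : Set V) ⊆ B}, ?_, ?_, ?_, ?_, ?_, ?_⟩
  · rintro _ ⟨c, hc, rfl, -⟩
    exact c.2.finite_toSet
  · rintro _ ⟨c, hc, rfl, -⟩ _ ⟨c', hc', rfl, -⟩ hne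
    have : c ≠ c' := fun h => hne (by rw [h])
    exact (h.dis c hc c' hc' this).mono (h.sub c hc) (h.sub c' hc')
  · rintro x (hx | ⟨_, ⟨c, hc, rfl, hcB⟩, hx⟩)
    · exact ⟨hXB hx, hPU x (hXP hx)⟩
    · exact ⟨hcB hx, hPU x (h.subP c hc hx)⟩
  · have hex : ∀ F₁ : Set V, ∃ R : Set V, ∀ c ∈ C, F₁ = c.2 → R = c.1 := by
      intro F₁
      by_cases hc : ∃ c ∈ C, F₁ = c.2
      · obtain ⟨c, hc, he⟩ := hc
        refine ⟨c.1, fun c' hc' he' => ?_⟩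
        obtain ⟨x, hx⟩ := h.ne c hc
        have hx' : x ∈ c'.2 := by
          have h1 : x ∈ (c'.2 : Set V) := he' ▸ he ▸ hx
          exact h1
        rw [huniq c hc c' hc' x (h.sub c hc hx) (h.sub c' hc' hx')]
      · exact ⟨∅, fun c' hc' he' => absurd ⟨c', hc', he'⟩ hc⟩
    choose H hH using hex
    refine ⟨H, ?_, ?_⟩
    · rintro _ ⟨c, hc, rfl, hcB⟩
      rw [hH _ c hc rfl]
      refine ⟨h.conn c hc, ?_⟩
      ext x
      constructor
      · rintro ⟨hx, -, hxU⟩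
        by_contra hxF
        exact hxU (h.int c hc x hx hxF)
      · intro hx
        exact ⟨h.sub c hc hx, hcB hx, hPU x (h.subP c hc hx)⟩
    · rintro _ ⟨c, hc, rfl, -⟩ _ ⟨c', hc', rfl, -⟩ hne
      have : c ≠ c' := fun h => hne (by rw [h])
      change Disjoint (H _) (H _)
      rw [hH _ c hc rfl, hH _ c' hc' rfl]
      exact h.dis c hc c' hc' this
  · rintro v ⟨hvB, hvU⟩ hle
    by_cases hvF : ∃ c ∈ C, v ∈ c.2
    · obtain ⟨c, hc, hvc⟩ := hvF
      have hcB : (c.2 : Set V) ⊆ B := fun w hw => hBF c hc v hvc hvB w hw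
      refine ⟨c.2, ⟨c, hc, rfl, hcB⟩, hvc, ?_⟩
      have hpos : (0 : ℝ) < c.2.card := by
        exact_mod_cast (h.ne c hc).card_pos
      rw [avgDegIn, Set.ncard_coe_finset, lt_div_iff₀ hpos, finsum_mem_coe_finset]
      refine (hTcsum c hc).trans_le (Finset.sum_le_sum fun w hw => ?_)
      norm_cast
      refine Set.ncard_le_ncard ?_ (hAfin.inter_of_right _)
      rintro z ⟨hz1, hz2⟩
      have hwU : w ∉ U := hPU w (h.subP c hc hw)
      have hz3 : z ∈ Tv w := hTvF w hwU c hc hw hz2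
      exact ⟨hz1, hBT w (hcB hw) hwU z hz3 hz1, hTvU w hwU hz3⟩
    · exfalso
      push Not at hvF
      obtain ⟨T', hT'1, hT'2, hT'3⟩ := hTvdeg v hvU hvF
      have hsub : (T' : Set V) ⊆ G.neighborSet v ∩ (B \ U) := fun z hz =>
        ⟨hT'2 hz, hBT v hvB hvU z (hT'1 hz) (hT'2 hz), hTvU v hvU (hT'1 hz)⟩
      have hfin : (G.neighborSet v ∩ (B \ U)).Finite := hAfin.inter_of_right _
      have hcard := Set.ncard_le_ncard hsub hfin
      rw [Set.ncard_coe_finset] at hcard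
      rw [coe_le_iff, ← hfin.cast_ncard_eq] at hle
      have h2 : ((G.neighborSet v ∩ (B \ U)).ncard : ℝ) ≤ m := by simpa using hle.2
      have h3 : (T'.card : ℝ) ≤ (G.neighborSet v ∩ (B \ U)).ncard := by exact_mod_cast hcard
      linarith
  · exact fun f _ => hAfin.inter_of_right _

theorem Good.iUnion {k : ℕ} {m : ℝ} {G : SimpleGraph V} {P U : ℕ → Set V}
    {C : ℕ → Set (Set V × Finset V)} (h : ∀ n, Good k m G (P n) (U n) (C n))
    (hP : Monotone P) (hU : Monotone U) (hC : Monotone C) :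
    Good k m G (⋃ n, P n) (⋃ n, U n) (⋃ n, C n) := by
  have hPs : ∀ n, P n ⊆ ⋃ n, P n := fun n => Set.subset_iUnion P n
  refine ⟨?_, ?_, ?_, ?_, ?_, ?_, ?_, ?_, ?_⟩
  · rw [Set.disjoint_left]
    intro x hx hx'
    obtain ⟨a, ha⟩ := Set.mem_iUnion.1 hx
    obtain ⟨b, hb⟩ := Set.mem_iUnion.1 hx'
    exact Set.disjoint_left.1 (h (max a b)).disj (hP (le_max_left a b) ha)
      (hU (le_max_right a b) hb)
  · intro x hx y hxy hy
    obtain ⟨n, hn⟩ := Set.mem_iUnion.1 hx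
    obtain ⟨hyP, hor⟩ := (h n).bdry x hn y hxy (fun hyn => hy (Set.mem_iUnion.2 ⟨n, hyn⟩))
    refine ⟨hPs n hyP, ?_⟩
    rcases hor with ⟨S, hS, hSm⟩ | ⟨c, hc, hyc⟩
    · exact Or.inl ⟨S, hS.trans (Set.inter_subset_inter_right _ (hPs n)), hSm⟩
    · exact Or.inr ⟨c, Set.mem_iUnion.2 ⟨n, hc⟩, hyc⟩
  · intro c hc
    obtain ⟨n, hn⟩ := Set.mem_iUnion.1 hc
    exact (h n).conn c hn
  · intro c hc
    obtain ⟨n, hn⟩ := Set.mem_iUnion.1 hc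
    exact (h n).sub c hn
  · intro c hc
    obtain ⟨n, hn⟩ := Set.mem_iUnion.1 hc
    exact ((h n).subP c hn).trans (hPs n)
  · intro c hc x hx hxF
    obtain ⟨n, hn⟩ := Set.mem_iUnion.1 hc
    exact Set.mem_iUnion.2 ⟨n, (h n).int c hn x hx hxF⟩
  · intro c hc
    obtain ⟨n, hn⟩ := Set.mem_iUnion.1 hc
    exact (h n).ne c hn
  · intro c hc
    obtain ⟨n, hn⟩ := Set.mem_iUnion.1 hc
    obtain ⟨S, hS, hS'⟩ := (h n).sum c hn
    exact ⟨S, hS.trans (hPs n), hS'⟩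
  · intro c hc c' hc' hne
    obtain ⟨a, ha⟩ := Set.mem_iUnion.1 hc
    obtain ⟨b, hb⟩ := Set.mem_iUnion.1 hc'
    exact (h (max a b)).dis c (hC (le_max_left a b) ha) c' (hC (le_max_right a b) hb) hne

theorem Good.initial {k : ℕ} {m : ℝ} {G : SimpleGraph V} (X : Set V) : Good k m G X ∅ ∅ := by
  refine ⟨?_, ?_, ?_, ?_, ?_, ?_, ?_, ?_, ?_⟩ <;> simp

/-- Handle a sequence of rays one after the other. -/
theorem Good.seq {k : ℕ} {m : ℝ} {G : SimpleGraph V}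
    (hdomlt : ∀ r : ℕ → V, IsRay G r → (Dom G r).encard < (k : ℕ∞))
    (hrel : ∀ r : ℕ → V, IsRay G r → (m : EReal) < (relDegree G r : EReal))
    {X : Set V} (hX : X.Finite) (r : ℕ → ℕ → V) (hr : ∀ n, IsRay G (r n)) :
    ∃ P U C, Good k m G P U C ∧ X ⊆ P ∧
      ∀ n f, IsRay G f → EquivRay G (r n) f → ∀ᶠ i in Filter.atTop, f i ∈ U := by
  let St := {s : Set V × Set V × Set (Set V × Finset V) // Good k m G s.1 s.2.1 s.2.2 ∧ s.1.Finite}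
  have hst : ∀ (n : ℕ) (s : St), ∃ s' : St, s.1.1 ⊆ s'.1.1 ∧ s.1.2.1 ⊆ s'.1.2.1 ∧
      s.1.2.2 ⊆ s'.1.2.2 ∧ ∀ᶠ i in Filter.atTop, r n i ∈ s'.1.2.1 := by
    rintro n ⟨s, hs, hfin⟩
    obtain ⟨P', U', C', hg, hf', h1, h2, h3, h4⟩ :=
      hs.step hfin (hr n) (hdomlt _ (hr n)) (hrel _ (hr n))
    exact ⟨⟨(P', U', C'), hg, hf'⟩, h1, h2, h3, h4⟩
  choose nx h1 h2 h3 h4 using hst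
  let s : ℕ → St := fun n => Nat.rec ⟨(X, ∅, ∅), Good.initial X, hX⟩ (fun n s => nx n s) n
  have hs : ∀ n, s (n + 1) = nx n (s n) := fun n => rfl
  refine ⟨⋃ n, (s n).1.1, ⋃ n, (s n).1.2.1, ⋃ n, (s n).1.2.2,
    Good.iUnion (fun n => (s n).2.1) (monotone_nat_of_le_succ fun n => ?_)
      (monotone_nat_of_le_succ fun n => ?_) (monotone_nat_of_le_succ fun n => ?_), ?_, ?_⟩
  · rw [hs]; exact h1 _ _
  · rw [hs]; exact h2 _ _
  · rw [hs]; exact h3 _ _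
  · exact Set.subset_iUnion (fun n => (s n).1.1) 0
  · intro n f hf hnf
    have hev := h4 n (s n)
    rw [← hs] at hev
    have := EquivRay.eventually_in hf hnf (s (n + 1)).2.2
      (fun x hx y hxy hy => ((s (n + 1)).2.1.bdry x hx y hxy hy).1) hev
    exact this.mono fun i hi => Set.mem_iUnion.2 ⟨n + 1, hi⟩

/-- cutting off all ends. If `G` has at most countably many ends,
every end is dominated by fewer than `k` vertices, every vertex has degree
`> m` and every end has relative degree `> m`, then for every finite `X` there
are an induced subgraph `G'` (on the vertex set `A`) and a collection `𝓕` of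
pairwise disjoint finite vertex sets with properties (i)–(iv). -/
theorem cutoff_all_ends (k : ℕ) (m : ℚ) (G : SimpleGraph V)
    (hcount : Countable (Ends G))
    (hdomlt : ∀ r : ℕ → V, IsRay G r → (Dom G r).encard < (k : ℕ∞))
    (hdeg : ∀ v, ((m : ℝ) : EReal) < degER G v)
    (hrel : ∀ r : ℕ → V, IsRay G r → ((m : ℝ) : EReal) < (relDegree G r : EReal))
    (X : Set V) (hX : X.Finite) :
    ∃ (A : Set V) (F : Set (Set V)),
      (∀ F₁ ∈ F, F₁.Finite) ∧ F.PairwiseDisjoint id ∧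
      X ∪ ⋃₀ F ⊆ A ∧
      (∃ H : Set V → Set V, (∀ F₁ ∈ F, (G.induce (H F₁)).Connected ∧
          H F₁ ∩ A = F₁) ∧ F.PairwiseDisjoint H) ∧
      (∀ v ∈ A, (((G.neighborSet v ∩ A).encard : ℝ≥0∞) : EReal) ≤ ((m : ℝ) : EReal) →
          ∃ F₁ ∈ F, v ∈ F₁ ∧ (m : ℝ) - k + 1 < avgDegIn G A F₁) ∧
      (∀ f : ℕ → V, IsRay G f → (Set.range f ∩ A).Finite) := by
  rcases isEmpty_or_nonempty (Ends G) with hempty | hnonempty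
  · refine (Good.initial (k := k) (m := (m : ℝ)) (G := G) X).finish hdeg ?_ hX le_rfl
    intro f hf
    exact (hempty.false (Quot.mk _ ⟨f, hf⟩)).elim
  · obtain ⟨e, he⟩ := exists_surjective_nat (Ends G)
    choose r hr using fun n => Quot.exists_rep (e n)
    obtain ⟨P, U, C, hgood, hXP, hev⟩ := Good.seq (k := k) (m := (m : ℝ)) hdomlt hrel hX
      (fun n => (r n).1) (fun n => (r n).2)
    refine hgood.finish hdeg ?_ hX hXP
    intro f hf
    obtain ⟨n, hn⟩ := he (Quot.mk _ ⟨f, hf⟩)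
    refine hev n f hf (EquivRay.of_mk_eq (r n) ⟨f, hf⟩ ?_)
    rw [hr n, hn]

end Paper
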